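/- arXiv:2510.05456 — 4 statements merged into one kernel-verified Lean document; each statement's English description precedes it below -/
import Mathlib

section
/- Let t0 < t1 be reals, let h : ℝ → ℝ be differentiable on [t0, t1], and let α : ℝ → ℝ be a locally Lipschitz class K function. If h(t0) ≥ 0 and h'(t) ≥ -α(h(t)) for all t ∈ [t0, t1], then h(t) ≥ 0 for all t ∈ [t0, t1]. -/
/-!
Where `h` is negative, so is `α ∘ h`, and the differential inequality gives `h' ≥ 0` there: a
function that starts nonnegative and is nondecreasing wherever it is negative stays nonnegative.
This is a fencing argument in which the derivatives are only compared where the fence is already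
violated.
-/

open Set

theorem image_le_of_deriv_right_le_deriv_boundary_of_lt {f f' B B' : ℝ → ℝ} {a b : ℝ}
    (hf : ContinuousOn f (Icc a b))
    (hf' : ∀ x ∈ Ico a b, HasDerivWithinAt f (f' x) (Ici x) x)
    (hB : ContinuousOn B (Icc a b))
    (hB' : ∀ x ∈ Ico a b, HasDerivWithinAt B (B' x) (Ici x) x)
    (ha : f a ≤ B a) (bound : ∀ x ∈ Ico a b, B x < f x → f' x ≤ B' x) :
    ∀ x ∈ Icc a b, f x ≤ B x := by
  -- The offset `ε` puts each contact point in the region `B < f`; the slope `ε` makes the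
  -- derivative comparison strict there.
  have le_raised_boundary : ∀ ε > 0, ∀ x ∈ Icc a b, f x ≤ B x + ε * (1 + (x - a)) := by
    intro ε hε x hx
    refine image_le_of_deriv_right_lt_deriv_boundary' (B := fun y ↦ B y + ε * (1 + (y - a)))
      (B' := fun y ↦ B' y + ε) hf hf' ?_ (by fun_prop) (fun y hy ↦ ?_) (fun y hy hcontact ↦ ?_) hx
    · simpa using ha.trans (le_add_of_nonneg_right hε.le)
    · have raise_deriv : HasDerivAt (fun z ↦ ε * (1 + (z - a))) ε y := by
        simpa using (((hasDerivAt_id y).sub_const a).const_add 1).const_mul ε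
      exact (hB' y hy).add raise_deriv.hasDerivWithinAt
    · have raise_pos : 0 < ε * (1 + (y - a)) := mul_pos hε (by linarith [hy.1])
      linarith [bound y hy (by linarith)]
  intro x hx
  have factor_pos : 0 < 1 + (x - a) := by linarith [hx.1]
  refine le_of_forall_pos_le_add fun δ hδ ↦ ?_
  simpa only [div_mul_cancel₀ δ factor_pos.ne'] using
    le_raised_boundary (δ / (1 + (x - a))) (div_pos hδ factor_pos) x hx

theorem hasDerivWithinAt_Ici_of_differentiableOn_Icc {E : Type*} [NormedAddCommGroup E]
    [NormedSpace ℝ E] {f : ℝ → E} {a b x : ℝ} (hf : DifferentiableOn ℝ f (Icc a b))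
    (hx : x ∈ Ico a b) : HasDerivWithinAt f (derivWithin f (Icc a b) x) (Ici x) x :=
  (hf x (Ico_subset_Icc_self hx)).hasDerivWithinAt.mono_of_mem_nhdsWithin
    (Icc_mem_nhdsGE_of_mem hx)

theorem stmt_0_general {h h' α : ℝ → ℝ} {a b : ℝ} (hcont : ContinuousOn h (Icc a b))
    (hderiv : ∀ t ∈ Ico a b, HasDerivWithinAt h (h' t) (Ici t) t)
    (hα : ∀ y < 0, α y ≤ 0) (hinit : 0 ≤ h a) (hineq : ∀ t ∈ Ico a b, -α (h t) ≤ h' t) :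
    ∀ t ∈ Icc a b, 0 ≤ h t :=
  image_le_of_deriv_right_le_deriv_boundary_of_lt continuousOn_const
    (fun t _ ↦ hasDerivWithinAt_const t (Ici t) 0) hcont hderiv hinit
    fun t ht hneg ↦ (neg_nonneg.2 (hα (h t) hneg)).trans (hineq t ht)

/-- Comparison lemma for class K functions: if `h(t0) ≥ 0` and `h'(t) ≥ -α(h(t))`
on `[t0, t1]`, then `h(t) ≥ 0` on `[t0, t1]`. -/
theorem stmt_0 (t0 t1 : ℝ) (ht : t0 < t1) (h α : ℝ → ℝ)
    (hdiff : DifferentiableOn ℝ h (Set.Icc t0 t1))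
    (hα_cont : Continuous α) (hα_mono : StrictMono α) (hα_zero : α 0 = 0)
    (hα_lip : LocallyLipschitz α)
    (hinit : h t0 ≥ 0)
    (hineq : ∀ t ∈ Set.Icc t0 t1, derivWithin h (Set.Icc t0 t1) t ≥ -α (h t)) :
    ∀ t ∈ Set.Icc t0 t1, h t ≥ 0 :=
  stmt_0_general hdiff.continuousOn
    (fun _ ↦ hasDerivWithinAt_Ici_of_differentiableOn_Icc hdiff)
    (fun _ hy ↦ hα_zero ▸ (hα_mono hy).le) hinit fun t ht_mem ↦ hineq t (Ico_subset_Icc_self ht_mem)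
end

section
/- Let E = ℝⁿ, let f : E → E, let g : E → (ℝᵐ →ₗ E), let ρ ≥ 1, and let α_1, …, α_ρ : ℝ → ℝ be locally Lipschitz class K functions. Let h_0 : E → ℝ and recursively define h_i(z) = Dh_{i-1}(z)[f(z)] + α_i(h_{i-1}(z)) for i ∈ {1, …, ρ-1}, assuming each h_i (i ∈ {0, …, ρ-1}) is differentiable. Assume the relative degree condition: Dh_i(z)[g(z)u] = 0 for every z ∈ E, every u ∈ ℝᵐ, and every i ∈ {0, …, ρ-2}. Define H(z, u) = Dh_{ρ-1}(z)[f(z) + g(z)u] + α_ρ(h_{ρ-1}(z)). Fix T > 0, a sampling state x_k ∈ E, a set R ⊆ E, a set Uadm ⊆ ℝᵐ, and u_k ∈ Uadm. Let x : [0, T] → E be differentiable with x(0) = x_k and x'(t) = f(x(t)) + g(x(t))u_k for all t ∈ [0, T], and suppose x(t) ∈ R for all t ∈ [0, T]. Suppose the set { H(z, u) - H(x_k, u) : z ∈ R, u ∈ Uadm } is nonempty and bounded below with infimum φ, that H(x_k, u_k) + φ ≥ 0, and that h_i(x_k) ≥ 0 for every i ∈ {0, …, ρ-1}. Then h_i(x(t))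 ≥ 0 for every i ∈ {0, …, ρ-1} and every t ∈ [0, T]. -/
/-!
A real function that starts nonnegative, and whose derivative is nonnegative wherever the function
is negative, stays nonnegative. This applies to `v` whenever `v' + α(v) ≥ 0` with `α ≤ 0` on the
negative half-line.

Along the trajectory take `v t = h i (x t)`, by descending induction on `i`. For `i = ρ - 1` the
quantity `v' + α_ρ(v)` is `H (x t) uk ≥ H xk uk + φ ≥ 0`, because `x t` stays in `R`. For smaller
`i` the relative degree condition removes the input from `v'`, so `v' + α_{i+1}(v)` is
`h (i + 1) (x t)`, nonnegative by induction.
-/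

open Set

section Comparison

variable {a b : ℝ}

theorem nonneg_of_deriv_right_nonneg_of_neg {v v' : ℝ → ℝ} (hv : ContinuousOn v (Icc a b))
    (hv' : ∀ t ∈ Ico a b, HasDerivWithinAt v (v' t) (Ici t) t) (hva : 0 ≤ v a)
    (hneg : ∀ t ∈ Ico a b, v t < 0 → 0 ≤ v' t) {t : ℝ} (ht : t ∈ Icc a b) : 0 ≤ v t := by
  -- The negative barrier `-ε (1 + (s - a))` decreases strictly, while `v` does not decrease where
  -- it is negative, so `v` cannot cross the barrier downwards.
  have above_barrier : ∀ ε > 0, ∀ s ∈ Icc a b, -v s ≤ ε * (1 + (s - a)) := by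
    intro ε hε
    have barrier_pos : ∀ s ∈ Ico a b, 0 < ε * (1 + (s - a)) := fun s hs =>
      mul_pos hε (by linarith [hs.1])
    have start_le : -v a ≤ ε * (1 + (a - a)) := by
      rw [sub_self]
      linarith
    refine image_le_of_deriv_right_lt_deriv_boundary (B' := fun _ => ε) hv.neg
      (fun s hs => (hv' s hs).neg) start_le
      (fun s => by simpa using (((hasDerivAt_id s).sub_const a).const_add 1).const_mul ε)
      fun s hs hcontact => ?_
    have hvs : v s < 0 := neg_pos.mp ((barrier_pos s hs).trans_eq hcontact.symm)
    linarith [hneg s hs hvs]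
  have hlength : 0 < 1 + (t - a) := by linarith [ht.1]
  refine le_of_forall_pos_le_add fun δ hδ => ?_
  have hδt := above_barrier (δ / (1 + (t - a))) (div_pos hδ hlength) t ht
  rw [div_mul_cancel₀ δ hlength.ne'] at hδt
  linarith

theorem nonneg_of_deriv_right_add_nonneg {α v v' : ℝ → ℝ} (hα : ∀ s < 0, α s ≤ 0)
    (hv : ContinuousOn v (Icc a b)) (hv' : ∀ t ∈ Ico a b, HasDerivWithinAt v (v' t) (Ici t) t)
    (hva : 0 ≤ v a) (hrate : ∀ t ∈ Ico a b, 0 ≤ v' t + α (v t)) {t : ℝ} (ht : t ∈ Icc a b) :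
    0 ≤ v t :=
  nonneg_of_deriv_right_nonneg_of_neg hv hv' hva
    (fun s hs hvs => by linarith [hα _ hvs, hrate s hs]) ht

theorem nonneg_of_deriv_right_add_nonneg_chain {r : ℕ} {α v v' : ℕ → ℝ → ℝ}
    (hα : ∀ i ≤ r, ∀ s < 0, α i s ≤ 0) (hv : ∀ i ≤ r, ContinuousOn (v i) (Icc a b))
    (hv' : ∀ i ≤ r, ∀ t ∈ Ico a b, HasDerivWithinAt (v i) (v' i t) (Ici t) t)
    (hva : ∀ i ≤ r, 0 ≤ v i a)
    (hstep : ∀ i < r, ∀ t ∈ Ico a b, v (i + 1) t ≤ v' i t + α i (v i t))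
    (htop : ∀ t ∈ Ico a b, 0 ≤ v' r t + α r (v r t)) {i : ℕ} (hi : i ≤ r) :
    ∀ t ∈ Icc a b, 0 ≤ v i t := by
  induction hi using Nat.decreasingInduction with
  | self =>
    exact fun t => nonneg_of_deriv_right_add_nonneg (hα r le_rfl) (hv r le_rfl) (hv' r le_rfl)
      (hva r le_rfl) htop
  | of_succ i hi ih =>
    exact fun t => nonneg_of_deriv_right_add_nonneg (hα i hi.le) (hv i hi.le) (hv' i hi.le)
      (hva i hi.le) fun s hs => (ih s (Ico_subset_Icc_self hs)).trans (hstep i hi s hs)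

end Comparison

section HighOrderBarrier

variable {E U : Type*} [NormedAddCommGroup E] [NormedSpace ℝ E]

/-- Here `α i` is the class K function applied to `h i`, numbered `i + 1` in `stmt_4`. -/
theorem highOrderBarrier_nonneg {f : E → E} {g : E → U → E} {r : ℕ} {α : ℕ → ℝ → ℝ}
    {h : ℕ → E → ℝ} {a b : ℝ} {x : ℝ → E} {u : ℝ → U} (hα : ∀ i ≤ r, ∀ s < 0, α i s ≤ 0)
    (hrec : ∀ i < r, ∀ z, h (i + 1) z = fderiv ℝ (h i) z (f z) + α i (h i z))
    (hdiff : ∀ i ≤ r, Differentiable ℝ (h i))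
    (hreldeg : ∀ i < r, ∀ z w, fderiv ℝ (h i) z (g z w) = 0) (hx : ContinuousOn x (Icc a b))
    (hx' : ∀ t ∈ Ico a b, HasDerivWithinAt x (f (x t) + g (x t) (u t)) (Ici t) t)
    (hinit : ∀ i ≤ r, 0 ≤ h i (x a))
    (htop : ∀ t ∈ Ico a b,
      0 ≤ fderiv ℝ (h r) (x t) (f (x t) + g (x t) (u t)) + α r (h r (x t)))
    {i : ℕ} (hi : i ≤ r) : ∀ t ∈ Icc a b, 0 ≤ h i (x t) := by
  refine nonneg_of_deriv_right_add_nonneg_chain (v := fun i t => h i (x t)) hα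
    (fun i hi => (hdiff i hi).continuous.comp_continuousOn hx)
    (fun i hi t ht => (hdiff i hi (x t)).hasFDerivAt.comp_hasDerivWithinAt t (hx' t ht))
    hinit (fun i hi t _ => ?_) htop hi
  rw [hrec i hi, map_add, hreldeg i hi, add_zero]

theorem stmt_4_general (f : E → E) (g : E → U → E) (ρ : ℕ) (α : ℕ → ℝ → ℝ)
    (hα : ∀ i, 1 ≤ i → i ≤ ρ → ∀ s < 0, α i s ≤ 0) (h : ℕ → E → ℝ)
    (hrec : ∀ i, 1 ≤ i → i < ρ → ∀ z,
      h i z = fderiv ℝ (h (i - 1)) z (f z) + α i (h (i - 1) z))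
    (hdiff : ∀ i < ρ, Differentiable ℝ (h i))
    (hreldeg : ∀ i, i + 2 ≤ ρ → ∀ z u, fderiv ℝ (h i) z (g z u) = 0) (H : E → U → ℝ)
    (hH : ∀ z u, H z u = fderiv ℝ (h (ρ - 1)) z (f z + g z u) + α ρ (h (ρ - 1) z))
    (T : ℝ) (xk : E) (R : Set E) (Uadm : Set U) (uk : U) (huk : uk ∈ Uadm) (x : ℝ → E)
    (hx0 : x 0 = xk)
    (hx : ∀ t ∈ Icc 0 T, HasDerivWithinAt x (f (x t) + g (x t) uk) (Icc 0 T) t)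
    (hxR : ∀ t ∈ Icc 0 T, x t ∈ R) (φ : ℝ)
    (hφ : φ ∈ lowerBounds {d : ℝ | ∃ z ∈ R, ∃ u ∈ Uadm, d = H z u - H xk u})
    (hcond : 0 ≤ H xk uk + φ) (hinit : ∀ i < ρ, 0 ≤ h i xk) :
    ∀ i < ρ, ∀ t ∈ Icc 0 T, 0 ≤ h i (x t) := by
  intro i hi
  obtain ⟨r, rfl⟩ : ∃ r, ρ = r + 1 := Nat.exists_eq_add_one.mpr (Nat.zero_lt_of_lt hi)
  have hH_nonneg : ∀ t ∈ Icc 0 T, 0 ≤ H (x t) uk := fun t ht => by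
    linarith [hφ ⟨x t, hxR t ht, uk, huk, rfl⟩]
  exact highOrderBarrier_nonneg (α := fun i => α (i + 1)) (u := fun _ => uk)
    (fun i hi => hα (i + 1) (by omega) (by omega))
    (fun i hi => hrec (i + 1) (by omega) (by omega))
    (fun i hi => hdiff i (by omega)) (fun i hi => hreldeg i (by omega))
    (fun t ht => (hx t ht).continuousWithinAt)
    (fun t ht => (hx t (Ico_subset_Icc_self ht)).mono_of_mem_nhdsWithin (Icc_mem_nhdsGE_of_mem ht))
    (fun i hi => hx0 ▸ hinit i (by omega))
    (fun t ht => hH (x t) uk ▸ hH_nonneg t (Ico_subset_Icc_self ht)) (by omega)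

end HighOrderBarrier

/-- Sampled-data HOCBF theorem over one sampling interval: for `ẋ = f(x) + g(x)u`
with zero-order-hold input `u_k` on `[0, T]`, a safety function `h_0` of relative
degree `ρ` with auxiliary functions `h_i(z) = Dh_{i-1}(z)[f(z)] + α_i(h_{i-1}(z))`,
and a compensation term `φ` computed over the reachable set `R`, the compensated
highest-order barrier inequality at the sampling instant keeps all `h_i` nonnegative
over the whole interval. -/
theorem stmt_4 {n m : ℕ}
    (f : EuclideanSpace ℝ (Fin n) → EuclideanSpace ℝ (Fin n))
    (g : EuclideanSpace ℝ (Fin n) →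
      (EuclideanSpace ℝ (Fin m) →ₗ[ℝ] EuclideanSpace ℝ (Fin n)))
    (ρ : ℕ) (hρ : 1 ≤ ρ) (α : ℕ → ℝ → ℝ)
    (hα : ∀ i, 1 ≤ i → i ≤ ρ →
      Continuous (α i) ∧ StrictMono (α i) ∧ α i 0 = 0 ∧ LocallyLipschitz (α i))
    (h : ℕ → EuclideanSpace ℝ (Fin n) → ℝ)
    (hrec : ∀ i, 1 ≤ i → i < ρ → ∀ z,
      h i z = fderiv ℝ (h (i - 1)) z (f z) + α i (h (i - 1) z))
    (hdiff : ∀ i < ρ, Differentiable ℝ (h i))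
    (hreldeg : ∀ i, i + 2 ≤ ρ → ∀ z u, fderiv ℝ (h i) z (g z u) = 0)
    (H : EuclideanSpace ℝ (Fin n) → EuclideanSpace ℝ (Fin m) → ℝ)
    (hH : ∀ z u, H z u = fderiv ℝ (h (ρ - 1)) z (f z + g z u) + α ρ (h (ρ - 1) z))
    (T : ℝ) (hT : 0 < T) (xk : EuclideanSpace ℝ (Fin n))
    (R : Set (EuclideanSpace ℝ (Fin n))) (Uadm : Set (EuclideanSpace ℝ (Fin m)))
    (uk : EuclideanSpace ℝ (Fin m)) (huk : uk ∈ Uadm)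
    (x : ℝ → EuclideanSpace ℝ (Fin n)) (hx0 : x 0 = xk)
    (hx : ∀ t ∈ Set.Icc (0 : ℝ) T,
      HasDerivWithinAt x (f (x t) + g (x t) uk) (Set.Icc (0 : ℝ) T) t)
    (hxR : ∀ t ∈ Set.Icc (0 : ℝ) T, x t ∈ R)
    (Φ : Set ℝ) (hΦ : Φ = {d : ℝ | ∃ z ∈ R, ∃ u ∈ Uadm, d = H z u - H xk u})
    (hne : Φ.Nonempty) (hbdd : BddBelow Φ) (φ : ℝ) (hφ : φ = sInf Φ)
    (hcond : H xk uk + φ ≥ 0) (hinit : ∀ i < ρ, h i xk ≥ 0) :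
    ∀ i < ρ, ∀ t ∈ Set.Icc (0 : ℝ) T, h i (x t) ≥ 0 := by
  refine stmt_4_general f (fun z u => g z u) ρ α (fun i h1 hi s hs => ?_) h hrec hdiff hreldeg H hH
    T xk R Uadm uk huk x hx0 hx hxR φ (fun d hd => ?_) hcond hinit
  · exact (hα i h1 hi).2.2.1 ▸ ((hα i h1 hi).2.1 hs).le
  · exact hφ ▸ csInf_le hbdd (hΦ ▸ hd)
end

section
/- Let E = ℝⁿ, let f : E → E, let g : E → (ℝᵐ →ₗ E), let ρ ≥ 1, and let α_1, …, α_ρ : ℝ → ℝ be locally Lipschitz class K functions. Let h_0 : E → ℝ and recursively define h_i(z) = Dh_{i-1}(z)[f(z)] + α_i(h_{i-1}(z)) for i ∈ {1, …, ρ-1}, assuming each h_i (i ∈ {0, …, ρ-1}) is differentiable, and assume Dh_i(z)[g(z)u] = 0 for every z ∈ E, u ∈ ℝᵐ, and i ∈ {0, …, ρ-2}. Define H(z, u) = Dh_{ρ-1}(z)[f(z) + g(z)u] + α_ρ(h_{ρ-1}(z)). Fix T > 0, a set Uadm ⊆ ℝᵐ, a sequence of inputs u : ℕ → Uadm, and a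 continuous trajectory x : ℝ → E such that for every k ∈ ℕ, x is differentiable on [kT, (k+1)T] with x'(t) = f(x(t)) + g(x(t))u_k there. Suppose for every k ∈ ℕ there is a set R_k ⊆ E with x(t) ∈ R_k for all t ∈ [kT, (k+1)T], such that the set { H(z, u) - H(x(kT), u) : z ∈ R_k, u ∈ Uadm } is nonempty and bounded below with infimum φ_k, and H(x(kT), u_k) + φ_k ≥ 0. If h_i(x(0)) ≥ 0 for every i ∈ {0, …, ρ-1}, then h_i(x(t)) ≥ 0 for every i ∈ {0, …, ρ-1} and every t ≥ 0. -/
/-!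
Where a function `y` with `y' + α (y) ≥ 0` is negative, the sign of `α` forces `y' ≥ 0`, so `y`
cannot leave the nonnegative half-line. Along the trajectory, `h (ρ - 1)` satisfies such an
inequality because `H (x t) (u k) ≥ H (x (k T)) (u k) + φ k ≥ 0` on the `k`-th sampling interval,
and `h i` satisfies it as soon as `h (i + 1)` is nonnegative, because the input does not enter the
derivative of `h i`. Descending induction on `i` concludes. Working with right derivatives
throughout absorbs the jumps of the input at the sampling instants.
-/

open Set

section RightDeriv

variable {a : ℝ}

theorem nonneg_of_rightDeriv_nonneg_of_neg {y y' : ℝ → ℝ} (hcont : ContinuousOn y (Ici a))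
    (hderiv : ∀ t ≥ a, HasDerivWithinAt y (y' t) (Ici t) t) (hinit : 0 ≤ y a)
    (hneg : ∀ t ≥ a, y t < 0 → 0 ≤ y' t) {t : ℝ} (ht : a ≤ t) : 0 ≤ y t := by
  -- `-y` cannot cross a line that is positive and strictly increasing on `[a, ∞)`.
  have neg_le_line : ∀ δ > 0, -y t ≤ δ * (1 + (t - a)) := by
    intro δ hδ
    refine image_le_of_deriv_right_lt_deriv_boundary' (f := fun s ↦ -y s) (f' := fun s ↦ -y' s)
      (B := fun s ↦ δ * (1 + (s - a))) (B' := fun _ ↦ δ)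
      (hcont.mono Icc_subset_Ici_self).neg (fun s hs ↦ (hderiv s hs.1).neg) ?_ (by fun_prop)
      (fun s _ ↦ ?_) (fun s hs hcross ↦ ?_) (right_mem_Icc.2 ht)
    · linarith
    · simpa using ((((hasDerivAt_id s).sub_const a).const_add 1).const_mul δ).hasDerivWithinAt
    · have line_pos : 0 < δ * (1 + (s - a)) := mul_pos hδ (by linarith [hs.1])
      linarith [hneg s hs.1 (by linarith)]
  have height_pos : 0 < 1 + (t - a) := by linarith
  have neg_le_zero : -y t ≤ 0 := le_of_forall_pos_le_add fun ε hε ↦ by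
    simpa [div_mul_cancel₀ ε height_pos.ne'] using neg_le_line _ (div_pos hε height_pos)
  exact neg_nonpos.1 neg_le_zero

theorem nonneg_of_rightDeriv_add_nonneg {y y' α : ℝ → ℝ} (hα : ∀ s < 0, α s ≤ 0)
    (hcont : ContinuousOn y (Ici a)) (hderiv : ∀ t ≥ a, HasDerivWithinAt y (y' t) (Ici t) t)
    (hinit : 0 ≤ y a) (hbarrier : ∀ t ≥ a, 0 ≤ y' t + α (y t)) {t : ℝ} (ht : a ≤ t) :
    0 ≤ y t :=
  nonneg_of_rightDeriv_nonneg_of_neg hcont hderiv hinit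
    (fun s hs hys ↦ by linarith [hbarrier s hs, hα _ hys]) ht

theorem nonneg_of_succ_le_rightDeriv_add {r : ℕ} {y y' α : ℕ → ℝ → ℝ}
    (hα : ∀ i ≤ r, ∀ s < 0, α i s ≤ 0) (hcont : ∀ i ≤ r, ContinuousOn (y i) (Ici a))
    (hderiv : ∀ i ≤ r, ∀ t ≥ a, HasDerivWithinAt (y i) (y' i t) (Ici t) t)
    (hinit : ∀ i ≤ r, 0 ≤ y i a)
    (hsucc : ∀ i < r, ∀ t ≥ a, y (i + 1) t ≤ y' i t + α i (y i t))
    (hlast : ∀ t ≥ a, 0 ≤ y' r t + α r (y r t)) {i : ℕ} (hi : i ≤ r) :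
    ∀ t ≥ a, 0 ≤ y i t := by
  have nonneg_of_barrier : ∀ j ≤ r, (∀ t ≥ a, 0 ≤ y' j t + α j (y j t)) → ∀ t ≥ a, 0 ≤ y j t :=
    fun j hj hbarrier _ ↦
      nonneg_of_rightDeriv_add_nonneg (hα j hj) (hcont j hj) (hderiv j hj) (hinit j hj) hbarrier
  induction hi using Nat.decreasingInduction with
  | self => exact nonneg_of_barrier r le_rfl hlast
  | of_succ j hj ih =>
    exact nonneg_of_barrier j hj.le fun t ht ↦ (ih t ht).trans (hsucc j hj t ht)

end RightDeriv

theorem exists_nat_mem_Ico_mul {T t : ℝ} (hT : 0 < T) (ht : 0 ≤ t) :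
    ∃ k : ℕ, t ∈ Ico ((k : ℝ) * T) (((k : ℝ) + 1) * T) :=
  ⟨⌊t / T⌋₊, (le_div_iff₀ hT).1 (Nat.floor_le (div_nonneg ht hT.le)),
    (div_lt_iff₀ hT).1 (Nat.lt_floor_add_one _)⟩

section NormedSpace

variable {E : Type*} [NormedAddCommGroup E] [NormedSpace ℝ E]

theorem hasDerivWithinAt_Ici_of_Icc {x : ℝ → E} {v : E} {a b t : ℝ} (ht : t ∈ Ico a b)
    (hx : HasDerivWithinAt x v (Icc a b) t) : HasDerivWithinAt x v (Ici t) t :=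
  (hx.mono (Icc_subset_Icc_left ht.1)).mono_of_mem_nhdsWithin (Icc_mem_nhdsGE ht.2)

theorem stmt_6_general {U : Type*} (f : E → E) (g : E → U → E) (ρ : ℕ) (α : ℕ → ℝ → ℝ)
    (hα : ∀ i, 1 ≤ i → i ≤ ρ → ∀ s < 0, α i s ≤ 0) (h : ℕ → E → ℝ)
    (hrec : ∀ i, 1 ≤ i → i < ρ → ∀ z,
      h i z = fderiv ℝ (h (i - 1)) z (f z) + α i (h (i - 1) z))
    (hdiff : ∀ i < ρ, Differentiable ℝ (h i))
    (hreldeg : ∀ i, i + 2 ≤ ρ → ∀ z u, fderiv ℝ (h i) z (g z u) = 0)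
    (H : E → U → ℝ)
    (hH : ∀ z u, H z u = fderiv ℝ (h (ρ - 1)) z (f z + g z u) + α ρ (h (ρ - 1) z))
    (T : ℝ) (hT : 0 < T) (Uadm : Set U) (u : ℕ → U) (hu : ∀ k, u k ∈ Uadm)
    (x : ℝ → E) (hxcont : ContinuousOn x (Ici 0))
    (hx : ∀ k : ℕ, ∀ t ∈ Icc ((k : ℝ) * T) (((k : ℝ) + 1) * T),
      HasDerivWithinAt x (f (x t) + g (x t) (u k))
        (Icc ((k : ℝ) * T) (((k : ℝ) + 1) * T)) t)
    (R : ℕ → Set E) (hxR : ∀ k : ℕ, ∀ t ∈ Icc ((k : ℝ) * T) (((k : ℝ) + 1) * T), x t ∈ R k)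
    (φ : ℕ → ℝ) (hφ : ∀ k : ℕ, ∀ z ∈ R k, ∀ w ∈ Uadm, φ k ≤ H z w - H (x (k * T)) w)
    (hcond : ∀ k : ℕ, 0 ≤ H (x (k * T)) (u k) + φ k) (hinit : ∀ i < ρ, 0 ≤ h i (x 0)) :
    ∀ i < ρ, ∀ t ≥ (0 : ℝ), 0 ≤ h i (x t) := by
  intro i hi
  obtain ⟨r, rfl⟩ : ∃ r, ρ = r + 1 := Nat.exists_eq_add_one_of_ne_zero (by omega)
  choose! k hk using fun t (ht : 0 ≤ t) ↦ exists_nat_mem_Ico_mul hT ht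
  have H_nonneg : ∀ t ≥ 0, 0 ≤ H (x t) (u (k t)) := fun t ht ↦ by
    have hxt := hxR (k t) t (Ico_subset_Icc_self (hk t ht))
    linarith [hφ (k t) (x t) hxt (u (k t)) (hu _), hcond (k t)]
  refine nonneg_of_succ_le_rightDeriv_add (y := fun j t ↦ h j (x t))
    (y' := fun j t ↦ fderiv ℝ (h j) (x t) (f (x t) + g (x t) (u (k t))))
    (α := fun j ↦ α (j + 1)) (fun j hj ↦ hα (j + 1) (by omega) (by omega))
    (fun j hj ↦ (hdiff j (by omega)).continuous.comp_continuousOn hxcont)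
    (fun j hj t ht ↦ ?_) (fun j hj ↦ hinit j (by omega)) (fun j hj t _ ↦ ?_) (fun t ht ↦ ?_)
    (Nat.le_of_lt_succ hi)
  · have hxt := hx (k t) t (Ico_subset_Icc_self (hk t ht))
    exact (hdiff j (by omega) (x t)).hasFDerivAt.comp_hasDerivWithinAt t
      (hasDerivWithinAt_Ici_of_Icc (hk t ht) hxt)
  · rw [map_add, hreldeg j (by omega), add_zero]
    exact (hrec (j + 1) (by omega) (by omega) (x t)).le
  · exact (H_nonneg t ht).trans_eq (hH _ _)

end NormedSpace

/-- Forward invariance for the closed loop with SdHOCBF constraints: on each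
sampling interval `[kT, (k+1)T]` the zero-order-hold input `u k` satisfies the
compensated highest-order barrier inequality at the sampling instant (with
compensation `φ k` computed over a reachable set `R k`), so the trajectory stays
in the intersection of the zero-superlevel sets of `h_0, …, h_{ρ-1}` for all
`t ≥ 0`, provided it starts there. -/
theorem stmt_6 {n m : ℕ}
    (f : EuclideanSpace ℝ (Fin n) → EuclideanSpace ℝ (Fin n))
    (g : EuclideanSpace ℝ (Fin n) →
      (EuclideanSpace ℝ (Fin m) →ₗ[ℝ] EuclideanSpace ℝ (Fin n)))
    (ρ : ℕ) (hρ : 1 ≤ ρ) (α : ℕ → ℝ → ℝ)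
    (hα : ∀ i, 1 ≤ i → i ≤ ρ →
      Continuous (α i) ∧ StrictMono (α i) ∧ α i 0 = 0 ∧ LocallyLipschitz (α i))
    (h : ℕ → EuclideanSpace ℝ (Fin n) → ℝ)
    (hrec : ∀ i, 1 ≤ i → i < ρ → ∀ z,
      h i z = fderiv ℝ (h (i - 1)) z (f z) + α i (h (i - 1) z))
    (hdiff : ∀ i < ρ, Differentiable ℝ (h i))
    (hreldeg : ∀ i, i + 2 ≤ ρ → ∀ z u, fderiv ℝ (h i) z (g z u) = 0)
    (H : EuclideanSpace ℝ (Fin n) → EuclideanSpace ℝ (Fin m) → ℝ)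
    (hH : ∀ z u, H z u = fderiv ℝ (h (ρ - 1)) z (f z + g z u) + α ρ (h (ρ - 1) z))
    (T : ℝ) (hT : 0 < T)
    (Uadm : Set (EuclideanSpace ℝ (Fin m)))
    (u : ℕ → EuclideanSpace ℝ (Fin m)) (hu : ∀ k, u k ∈ Uadm)
    (x : ℝ → EuclideanSpace ℝ (Fin n)) (hxcont : Continuous x)
    (hx : ∀ k : ℕ, ∀ t ∈ Set.Icc ((k : ℝ) * T) (((k : ℝ) + 1) * T),
      HasDerivWithinAt x (f (x t) + g (x t) (u k))
        (Set.Icc ((k : ℝ) * T) (((k : ℝ) + 1) * T)) t)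
    (R : ℕ → Set (EuclideanSpace ℝ (Fin n)))
    (hxR : ∀ k : ℕ, ∀ t ∈ Set.Icc ((k : ℝ) * T) (((k : ℝ) + 1) * T), x t ∈ R k)
    (Φ : ℕ → Set ℝ)
    (hΦ : ∀ k, Φ k = {d : ℝ | ∃ z ∈ R k, ∃ w ∈ Uadm, d = H z w - H (x (k * T)) w})
    (hne : ∀ k, (Φ k).Nonempty) (hbdd : ∀ k, BddBelow (Φ k))
    (φ : ℕ → ℝ) (hφ : ∀ k, φ k = sInf (Φ k))
    (hcond : ∀ k : ℕ, H (x (k * T)) (u k) + φ k ≥ 0)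
    (hinit : ∀ i < ρ, h i (x 0) ≥ 0) :
    ∀ i < ρ, ∀ t ≥ (0 : ℝ), h i (x t) ≥ 0 := by
  have hα_nonpos : ∀ i, 1 ≤ i → i ≤ ρ → ∀ s < 0, α i s ≤ 0 := fun i hi hiρ s hs ↦
    (hα i hi hiρ).2.2.1 ▸ ((hα i hi hiρ).2.1 hs).le
  have hφ_le : ∀ k : ℕ, ∀ z ∈ R k, ∀ w ∈ Uadm, φ k ≤ H z w - H (x (k * T)) w :=
    fun k z hz w hw ↦ hφ k ▸ csInf_le (hbdd k) (hΦ k ▸ ⟨z, hz, w, hw, rfl⟩)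
  exact stmt_6_general f (fun z ↦ g z) ρ α hα_nonpos h hrec hdiff hreldeg H hH T hT Uadm u hu x
    hxcont.continuousOn hx R hxR φ hφ_le hcond hinit
end

section
/- Let E = ℝ³ with the Euclidean inner product, let D : E →ₗ E be a linear map, let c ∈ E and r ∈ ℝ, and let p, v, a, j : ℝ → E be differentiable functions and s : ℝ → E a function such that p' = v, v' = -D v + a, a' = j, and j' = s. Define h(t) = ‖p(t) - c‖² - r². Then h is three times differentiable with h'(t) = 2⟨p(t) - c, v(t)⟩, h''(t) = 2‖v(t)‖² + 2⟨p(t) - c, a(t) - D v(t)⟩, and h'''(t) = 6⟨v(t), a(t) - D v(t)⟩ + 2⟨p(t) - c, j(t) - D(a(t) - D v(t))⟩; in particular, h', h'', and h''' do not involve the input s. Moreover, if s is continuous then h is four times differentiable with h''''(t) = 6‖a(t) - D v(t)‖² + 8⟨v(t), j(t) - D(a(t) - D v(t))⟩ + 2⟨p(t) - c, s(t) - D j(t) + D²(a(t) - D v(t))⟩, which contains the term 2⟨p(t) - c, s(t)⟩ involving the input. -/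
open RealInnerProductSpace

/-!
With `q = p - c` and the acceleration `w = a - D v`, the dynamics read `q' = v`, `v' = w`,
`w' = j - D w`. Thus `w` is driven by `j` exactly as `v` is driven by `a`, and differentiating
once more gives `w'' = s - D j + D² w`. The four formulas are the Leibniz rule for the inner
product applied successively to `‖q‖²`; the input `s` enters only through `w''`, which first
occurs in the fourth derivative.
-/

section LinearDrag

variable {𝕜 F : Type*} [NontriviallyNormedField 𝕜] [NormedAddCommGroup F] [NormedSpace 𝕜 F]
  {D : F →L[𝕜] F} {v a : 𝕜 → F} {j₀ : F} {t : 𝕜}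

theorem hasDerivAt_sub_drag (hv : HasDerivAt v (a t - D (v t)) t) (ha : HasDerivAt a j₀ t) :
    HasDerivAt (fun t => a t - D (v t)) (j₀ - D (a t - D (v t))) t :=
  ha.sub (D.hasFDerivAt.comp_hasDerivAt t hv)

end LinearDrag

section InnerProduct

variable {E : Type*} [NormedAddCommGroup E] [InnerProductSpace ℝ E]

section DerivativesOfNormSq

variable {q v w y : ℝ → E} {w₀ y₀ z₀ : E} {t : ℝ}

theorem hasDerivAt_two_mul_inner (hq : HasDerivAt q (v t) t) (hv : HasDerivAt v w₀ t) :
    HasDerivAt (fun t => 2 * ⟪q t, v t⟫) (2 * ‖v t‖ ^ 2 + 2 * ⟪q t, w₀⟫) t := by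
  refine ((hq.inner ℝ hv).const_mul 2).congr_deriv ?_
  rw [real_inner_self_eq_norm_sq]
  ring

theorem hasDerivAt_two_mul_norm_sq_add_two_mul_inner (hq : HasDerivAt q (v t) t)
    (hv : HasDerivAt v (w t) t) (hw : HasDerivAt w y₀ t) :
    HasDerivAt (fun t => 2 * ‖v t‖ ^ 2 + 2 * ⟪q t, w t⟫)
      (6 * ⟪v t, w t⟫ + 2 * ⟪q t, y₀⟫) t := by
  refine ((hv.norm_sq.const_mul 2).add ((hq.inner ℝ hw).const_mul 2)).congr_deriv ?_
  ring

theorem hasDerivAt_six_mul_inner_add_two_mul_inner (hq : HasDerivAt q (v t) t)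
    (hv : HasDerivAt v (w t) t) (hw : HasDerivAt w (y t) t) (hy : HasDerivAt y z₀ t) :
    HasDerivAt (fun t => 6 * ⟪v t, w t⟫ + 2 * ⟪q t, y t⟫)
      (6 * ‖w t‖ ^ 2 + 8 * ⟪v t, y t⟫ + 2 * ⟪q t, z₀⟫) t := by
  refine (((hv.inner ℝ hw).const_mul 6).add ((hq.inner ℝ hy).const_mul 2)).congr_deriv ?_
  rw [real_inner_self_eq_norm_sq]
  ring

end DerivativesOfNormSq

theorem stmt_12_general (D : E →L[ℝ] E) (c : E) (r : ℝ) (p v a j s : ℝ → E)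
    (hp : ∀ t, HasDerivAt p (v t) t)
    (hv : ∀ t, HasDerivAt v (-D (v t) + a t) t)
    (ha : ∀ t, HasDerivAt a (j t) t)
    (hj : ∀ t, HasDerivAt j (s t) t)
    (h : ℝ → ℝ) (hh : ∀ t, h t = ‖p t - c‖ ^ 2 - r ^ 2) :
    (∀ t, HasDerivAt h (2 * ⟪p t - c, v t⟫) t) ∧
    (∀ t, HasDerivAt (fun t => 2 * ⟪p t - c, v t⟫)
      (2 * ‖v t‖ ^ 2 + 2 * ⟪p t - c, a t - D (v t)⟫) t) ∧
    (∀ t, HasDerivAt (fun t => 2 * ‖v t‖ ^ 2 + 2 * ⟪p t - c, a t - D (v t)⟫)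
      (6 * ⟪v t, a t - D (v t)⟫ + 2 * ⟪p t - c, j t - D (a t - D (v t))⟫) t) ∧
    (∀ t, HasDerivAt
      (fun t => 6 * ⟪v t, a t - D (v t)⟫ + 2 * ⟪p t - c, j t - D (a t - D (v t))⟫)
      (6 * ‖a t - D (v t)‖ ^ 2 + 8 * ⟪v t, j t - D (a t - D (v t))⟫ +
        2 * ⟪p t - c, s t - D (j t) + D (D (a t - D (v t)))⟫) t) := by
  have hq (t : ℝ) : HasDerivAt (fun t => p t - c) (v t) t := (hp t).sub_const c
  have hv' (t : ℝ) : HasDerivAt v (a t - D (v t)) t := by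
    simpa only [neg_add_eq_sub] using hv t
  have hw (t : ℝ) : HasDerivAt (fun t => a t - D (v t)) (j t - D (a t - D (v t))) t :=
    hasDerivAt_sub_drag (hv' t) (ha t)
  have hw' (t : ℝ) : HasDerivAt (fun t => j t - D (a t - D (v t)))
      (s t - D (j t) + D (D (a t - D (v t)))) t := by
    simpa only [map_sub D (j t), sub_sub_eq_add_sub, sub_add_eq_add_sub] using
      hasDerivAt_sub_drag (hw t) (hj t)
  refine ⟨fun t => ?_, fun t => hasDerivAt_two_mul_inner (hq t) (hv' t),
    fun t => hasDerivAt_two_mul_norm_sq_add_two_mul_inner (hq t) (hv' t) (hw t),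
    fun t => hasDerivAt_six_mul_inner_add_two_mul_inner (hq t) (hv' t) (hw t) (hw' t)⟩
  rw [funext hh]
  exact (hq t).norm_sq.sub_const _

end InnerProduct

/-- Relative degree 4 of the obstacle safety function `h = ‖p - c‖² - r²` along the
augmented dynamics `p' = v`, `v' = -Dv + a`, `a' = j`, `j' = s`: the first three
derivatives of `h` have the stated closed forms not involving `s`, and (for `s`
continuous) the fourth derivative contains the input term `2⟨p - c, s⟩`. -/
theorem stmt_12 (D : EuclideanSpace ℝ (Fin 3) →ₗ[ℝ] EuclideanSpace ℝ (Fin 3))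
    (c : EuclideanSpace ℝ (Fin 3)) (r : ℝ)
    (p v a j s : ℝ → EuclideanSpace ℝ (Fin 3))
    (hp : ∀ t, HasDerivAt p (v t) t)
    (hv : ∀ t, HasDerivAt v (-D (v t) + a t) t)
    (ha : ∀ t, HasDerivAt a (j t) t)
    (hj : ∀ t, HasDerivAt j (s t) t)
    (h : ℝ → ℝ) (hh : ∀ t, h t = ‖p t - c‖ ^ 2 - r ^ 2) :
    (∀ t, HasDerivAt h (2 * ⟪p t - c, v t⟫) t) ∧
    (∀ t, HasDerivAt (fun t => 2 * ⟪p t - c, v t⟫)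
      (2 * ‖v t‖ ^ 2 + 2 * ⟪p t - c, a t - D (v t)⟫) t) ∧
    (∀ t, HasDerivAt (fun t => 2 * ‖v t‖ ^ 2 + 2 * ⟪p t - c, a t - D (v t)⟫)
      (6 * ⟪v t, a t - D (v t)⟫ + 2 * ⟪p t - c, j t - D (a t - D (v t))⟫) t) ∧
    (Continuous s →
      ∀ t, HasDerivAt
        (fun t => 6 * ⟪v t, a t - D (v t)⟫ + 2 * ⟪p t - c, j t - D (a t - D (v t))⟫)
        (6 * ‖a t - D (v t)‖ ^ 2 + 8 * ⟪v t, j t - D (a t - D (v t))⟫ +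
          2 * ⟪p t - c, s t - D (j t) + D (D (a t - D (v t)))⟫) t) := by
  obtain ⟨h₁, h₂, h₃, h₄⟩ :=
    stmt_12_general (LinearMap.toContinuousLinearMap D) c r p v a j s hp hv ha hj h hh
  exact ⟨h₁, h₂, h₃, fun _ => h₄⟩
end
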